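/- For all NG families n₁ and n₂, the operation ◁▷ can be recovered from ▷ and the meet: n₁ ◁▷ n₂ = (n₂ ▷ n₁) ⊓ (n₁ ▷ n₂). -/

import Mathlib

/-- The support of an NG family: the set of names where it is defined. -/
def NGsupp {V : Type*} (n : V → Option (V × V × V)) : Set V :=
  {u | (n u).isSome}

open Classical in
/-- The left-biased join surrogate `n₁ ▷ n₂`. -/
noncomputable def NGtri {V : Type*} (n₁ n₂ : V → Option (V × V × V)) :
    V → Option (V × V × V) := fun u =>
  if u ∈ NGsupp n₁ then n₁ u
  else if u ∈ NGsupp n₂ \ NGsupp n₁ then n₂ u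
  else none

/-- The conflict set `n₁ ⚡ n₂`. -/
def NGconflict {V : Type*} (n₁ n₂ : V → Option (V × V × V)) : Set V :=
  {u | u ∈ NGsupp n₁ ∩ NGsupp n₂ ∧ n₁ u ≠ n₂ u}

open Classical in
/-- The symmetric join surrogate `n₁ ◁▷ n₂`. -/
noncomputable def NGbowtie {V : Type*} (n₁ n₂ : V → Option (V × V × V)) :
    V → Option (V × V × V) := fun u =>
  if u ∈ NGsupp n₁ \ NGconflict n₁ n₂ then n₁ u
  else if u ∈ NGsupp n₂ \ NGconflict n₁ n₂ then n₂ u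
  else none

open Classical in
/-- The binary meet `n₁ ⊓ n₂`. -/
noncomputable def NGmeet {V : Type*} (n₁ n₂ : V → Option (V × V × V)) :
    V → Option (V × V × V) := fun u =>
  if ∃ t, n₁ u = some t ∧ n₂ u = some t then n₁ u else none

/-! The two biased joins `n₁ ▷ n₂` and `n₂ ▷ n₁` agree at a name exactly when it lies outside the
conflict set, and there both coincide with `n₁ ◁▷ n₂`. On the conflict set `n₁ ◁▷ n₂` is undefined,
and so is the meet of the biased joins because they disagree. -/

theorem option_or_comm_iff {α : Type*} {a b : Option α} :
    a.or b = b.or a ↔ (a.isSome → b.isSome → a = b) := by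
  cases a <;> cases b <;> simp

section

variable {V : Type*} {n₁ n₂ : V → Option (V × V × V)} {u : V}

theorem NGmeet_apply_of_eq (h : n₁ u = n₂ u) : NGmeet n₁ n₂ u = n₁ u := by
  cases h₁ : n₁ u <;> simp [NGmeet, ← h, h₁]

theorem NGmeet_apply_of_ne (h : n₁ u ≠ n₂ u) : NGmeet n₁ n₂ u = none :=
  if_neg fun ⟨_, h₁, h₂⟩ => h (h₁.trans h₂.symm)

theorem NGtri_apply (n₁ n₂ : V → Option (V × V × V)) (u : V) :
    NGtri n₁ n₂ u = (n₁ u).or (n₂ u) := by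
  cases h₁ : n₁ u <;> cases h₂ : n₂ u <;> simp [NGtri, NGsupp, h₁, h₂]

theorem NGtri_apply_comm_iff :
    NGtri n₂ n₁ u = NGtri n₁ n₂ u ↔ u ∉ NGconflict n₁ n₂ := by
  rw [NGtri_apply, NGtri_apply, eq_comm, option_or_comm_iff]
  simp [NGconflict, NGsupp]

theorem NGbowtie_apply_of_mem_conflict (h : u ∈ NGconflict n₁ n₂) : NGbowtie n₁ n₂ u = none := by
  simp [NGbowtie, h]

theorem NGbowtie_apply_of_notMem_conflict (h : u ∉ NGconflict n₁ n₂) :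
    NGbowtie n₁ n₂ u = NGtri n₁ n₂ u := by
  by_cases h₁ : u ∈ NGsupp n₁ <;> by_cases h₂ : u ∈ NGsupp n₂ <;>
    simp [NGbowtie, NGtri, h, h₁, h₂]

end

/-- `◁▷` is recovered from `▷` and the meet:
`n₁ ◁▷ n₂ = (n₂ ▷ n₁) ⊓ (n₁ ▷ n₂)`. -/
theorem NGbowtie_eq_meet_tri {V : Type*} (n₁ n₂ : V → Option (V × V × V)) :
    NGbowtie n₁ n₂ = NGmeet (NGtri n₂ n₁) (NGtri n₁ n₂) := by
  funext u
  by_cases hu : u ∈ NGconflict n₁ n₂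
  · have hne : NGtri n₂ n₁ u ≠ NGtri n₁ n₂ u := fun h => NGtri_apply_comm_iff.mp h hu
    rw [NGbowtie_apply_of_mem_conflict hu, NGmeet_apply_of_ne hne]
  · have heq : NGtri n₂ n₁ u = NGtri n₁ n₂ u := NGtri_apply_comm_iff.mpr hu
    rw [NGbowtie_apply_of_notMem_conflict hu, NGmeet_apply_of_eq heq, heq]
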